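/- arXiv:2408.06392 — 2 statements merged into one kernel-verified Lean document; each statement's English description precedes it below -/
import Mathlib

section
/- Let f be an almost embedding of K₅ − 45 (the complete graph on {1,…,5} with the edge {4,5} removed) in the plane. Then w_f(123, 4) − w_f(123, 5) is an odd integer, where w_f(123, l) := w'(p₁₂, f_l) + w'(p₂₃, f_l) + w'(p₃₁, f_l). -/
/-- Sum of the oriented angles ∠A₁OA₂ + ∠A₂OA₃ + ⋯ + ∠A_{m−1}OA_m at `O`
along a polygonal line given as a list of points in the plane `ℂ`,
where ∠AOB := Complex.arg ((B − O)/(A − O)) ∈ (−π, π]. -/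
noncomputable def angSum (O : ℂ) : List ℂ → ℝ
  | a :: b :: rest => Complex.arg ((b - O) / (a - O)) + angSum O (b :: rest)
  | _ => 0

/-- `w'(A₁…A_m, O)`: the (non-closed) winding number of a polygonal line around `O`,
i.e. `(∠A₁OA₂ + ⋯ + ∠A_{m−1}OA_m) / (2π)`. -/
noncomputable def wp (O : ℂ) (l : List ℂ) : ℝ := angSum O l / (2 * Real.pi)

/-- `w(A₁…A_m, O)`: the winding number of the closed polygonal line `A₁…A_m` around `O`,
i.e. `(∠A₁OA₂ + ⋯ + ∠A_{m−1}OA_m + ∠A_mOA₁) / (2π)`. -/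
noncomputable def wcl (O : ℂ) (l : List ℂ) : ℝ := wp O (l ++ [l.headI])

/-- The image of a polygonal line: the union of the segments between consecutive points. -/
def imagePL : List ℂ → Set ℂ
  | [] => ∅
  | [a] => {a}
  | a :: b :: rest => segment ℝ a b ∪ imagePL (b :: rest)

/-- Edges of `K₅ − 45`: all pairs of distinct vertices except `{4,5}`
(vertices `1,…,5` are encoded as `0,…,4 : Fin 5`, so the removed edge is `{3,4}`). -/
def IsEdgeK5m45 (i j : Fin 5) : Prop := i ≠ j ∧ ¬(i = 3 ∧ j = 4) ∧ ¬(i = 4 ∧ j = 3)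

/-!
If two polygonal lines `a ⋯ b` and `c ⋯ d` are disjoint, then moving the viewpoint from `a` to `b`
changes the angle swept by the second line as much as moving the viewpoint from `c` to `d` changes
the angle swept by the first: for two segments this follows from a separating line, and both sides
are additive under concatenation.

Apply this exchange to the sides of the triangle and the spokes from its vertices to a hub `b`. The
winding number of the triangle about `b` becomes a term independent of `b` plus the skew angle sum
of the spokes, divided by `2π`. Exchanging the spokes to `b` with those to a second hub `c` shows
that the two skew sums are opposite, so the winding numbers differ by the skew sum divided by `π`.
Modulo `2π` the skew sum telescopes to `3π ≡ π`: only the half turns between the directions from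
`a v` to `a (e v)` and back survive, where `e` rotates the vertices `a v`.
-/

theorem arg_div_eq_sub_of_re_pos {z w : ℂ} (hz : 0 < z.re) (hw : 0 < w.re) :
    Complex.arg (z / w) = Complex.arg z - Complex.arg w := by
  have hz₀ : z ≠ 0 := by rintro rfl; simp at hz
  have hw₀ : w ≠ 0 := by rintro rfl; simp at hw
  have hz' := abs_lt.1 (Complex.abs_arg_lt_pi_div_two_iff.2 (.inl hz))
  have hw' := abs_lt.1 (Complex.abs_arg_lt_pi_div_two_iff.2 (.inl hw))
  rw [← Complex.arg_coe_angle_toReal_eq_arg, Complex.arg_div_coe_angle hz₀ hw₀,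
    ← Real.Angle.coe_sub, Real.Angle.toReal_coe_eq_self_iff]
  constructor <;> linarith

theorem exists_forall_re_mul_sub_pos {s t : Set ℂ} (hs : Convex ℝ s) (hs' : IsCompact s)
    (ht : Convex ℝ t) (ht' : IsClosed t) (hst : Disjoint s t) :
    ∃ u : ℂ, ∀ a ∈ s, ∀ b ∈ t, 0 < (u * (b - a)).re := by
  obtain ⟨g, r, r', hr, hrr', hr'⟩ :=
    RCLike.geometric_hahn_banach_compact_closed (𝕜 := ℂ) hs hs' ht ht' hst
  refine ⟨g 1, fun a ha b hb => ?_⟩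
  have hg : g (b - a) = g 1 * (b - a) := by
    rw [mul_comm, ← smul_eq_mul, ← map_smul, smul_eq_mul, mul_one]
  rw [← hg, map_sub, Complex.sub_re]
  have h1 := hr a ha
  have h2 := hr' b hb
  simp only [RCLike.re_eq_complex_re] at h1 h2
  linarith

theorem isCompact_segment {E : Type*} [AddCommGroup E] [Module ℝ E] [TopologicalSpace E]
    [IsTopologicalAddGroup E] [ContinuousSMul ℝ E] (a b : E) : IsCompact (segment ℝ a b) := by
  rw [← convexHull_pair]
  exact (Set.toFinite {a, b}).isCompact_convexHull ℝ

/-- The polygonal line `l` is nonempty and joins `a` to `b`. The inductive form makes induction on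
polygonal lines keep track of the end points. -/
inductive Joins : (l : List ℂ) → (a b : ℂ) → Prop
  | singleton (a : ℂ) : Joins [a] a a
  | cons (a : ℂ) {b c : ℂ} {l : List ℂ} : Joins (b :: l) b c → Joins (a :: b :: l) a c

theorem joins_headI_getLast : ∀ {l : List ℂ} (hl : l ≠ []), Joins l l.headI (l.getLast hl)
  | [a], _ => .singleton a
  | a :: b :: l, _ => .cons a (joins_headI_getLast (List.cons_ne_nil b l))

theorem Joins.left_mem_imagePL {l : List ℂ} {a b : ℂ} (h : Joins l a b) : a ∈ imagePL l := by
  cases h with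
  | singleton => exact Set.mem_singleton a
  | cons _ _ => exact .inl (left_mem_segment ℝ _ _)

theorem angSum_cons_cons (O a b : ℂ) (l : List ℂ) :
    angSum O (a :: b :: l) = angSum O [a, b] + angSum O (b :: l) := by
  simp only [angSum, add_zero]

theorem coe_angSum_pair {O a b : ℂ} (ha : a ≠ O) (hb : b ≠ O) :
    (angSum O [a, b] : Real.Angle) = (b - O).arg - (a - O).arg := by
  simp only [angSum, add_zero]
  exact Complex.arg_div_coe_angle (sub_ne_zero.2 hb) (sub_ne_zero.2 ha)

theorem coe_angSum {l : List ℂ} {a b O : ℂ} (h : Joins l a b) (hO : O ∉ imagePL l) :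
    (angSum O l : Real.Angle) = (b - O).arg - (a - O).arg := by
  induction h with
  | singleton a => simp [angSum]
  | @cons a b c l h ih =>
    have haO : a ≠ O := fun hEq => hO (hEq ▸ (h.cons a).left_mem_imagePL)
    have hO' : O ∉ imagePL (b :: l) := fun hmem => hO (.inr hmem)
    have hbO : b ≠ O := fun hEq => hO' (hEq ▸ h.left_mem_imagePL)
    rw [angSum_cons_cons, Real.Angle.coe_add, ih hO', coe_angSum_pair haO hbO]
    abel

theorem coe_angSum_sub_angSum {a b c : ℂ} {l m : List ℂ} (hl : Joins l a c) (hm : Joins m b c)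
    (hbl : b ∉ imagePL l) (ham : a ∉ imagePL m) :
    ((angSum a m - angSum b l : ℝ) : Real.Angle) =
      (c - a).arg - (c - b).arg + (Real.pi : Real.Angle) := by
  have hab : a - b ≠ 0 := sub_ne_zero.2 fun hEq => hbl (hEq ▸ hl.left_mem_imagePL)
  rw [Real.Angle.coe_sub, coe_angSum hm ham, coe_angSum hl hbl, ← neg_sub a b,
    Complex.arg_neg_coe_angle hab, ← sub_eq_zero]
  calc _ = -(2 • (Real.pi : Real.Angle)) := by abel
    _ = 0 := by rw [Real.Angle.two_nsmul_coe_pi, neg_zero]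

/-- A line separating the two segments gives a branch of the argument defined on all the differences
`y - x` with `x` in the first segment and `y` in the second, so that all four angles split. -/
theorem angSum_pair_sub_comm_of_disjoint {a b c d : ℂ}
    (h : Disjoint (segment ℝ a b) (segment ℝ c d)) :
    angSum b [c, d] - angSum a [c, d] = angSum d [a, b] - angSum c [a, b] := by
  obtain ⟨u, hu⟩ := exists_forall_re_mul_sub_pos (convex_segment a b) (isCompact_segment a b)
    (convex_segment c d) (isCompact_segment c d).isClosed h
  have arg_div_sub_sub {x y x' y' : ℂ} (hx : x ∈ segment ℝ a b) (hy : y ∈ segment ℝ c d)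
      (hx' : x' ∈ segment ℝ a b) (hy' : y' ∈ segment ℝ c d) :
      ((y' - x') / (y - x)).arg = (u * (y' - x')).arg - (u * (y - x)).arg := by
    have hu₀ : u ≠ 0 := fun h₀ => by simpa [h₀] using hu x hx y hy
    rw [← mul_div_mul_left _ _ hu₀, arg_div_eq_sub_of_re_pos (hu x' hx' y' hy') (hu x hx y hy)]
  have ha := left_mem_segment ℝ a b
  have hb := right_mem_segment ℝ a b
  have hc := left_mem_segment ℝ c d
  have hd := right_mem_segment ℝ c d
  have sub_div_sub_swap (z : ℂ) : (b - z) / (a - z) = (z - b) / (z - a) := by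
    rw [← neg_sub z b, ← neg_sub z a, neg_div_neg_eq]
  simp only [angSum, add_zero, sub_div_sub_swap]
  rw [arg_div_sub_sub hb hc hb hd, arg_div_sub_sub ha hc ha hd, arg_div_sub_sub ha hd hb hd,
    arg_div_sub_sub ha hc hb hc]
  ring

theorem angSum_sub_comm_of_disjoint_segment {a b c d : ℂ} {l : List ℂ} (hl : Joins l c d)
    (h : Disjoint (segment ℝ a b) (imagePL l)) :
    angSum b l - angSum a l = angSum d [a, b] - angSum c [a, b] := by
  induction hl with
  | singleton c => simp only [angSum, sub_self]
  | @cons c x d l _ ih =>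
    rw [imagePL, Set.disjoint_union_right] at h
    linarith [angSum_pair_sub_comm_of_disjoint h.1, ih h.2, angSum_cons_cons a c x l,
      angSum_cons_cons b c x l]

theorem angSum_sub_comm_of_disjoint {a b c d : ℂ} {l m : List ℂ} (hl : Joins l a b)
    (hm : Joins m c d) (h : Disjoint (imagePL l) (imagePL m)) :
    angSum b m - angSum a m = angSum d l - angSum c l := by
  induction hl with
  | singleton a => simp only [angSum, sub_self]
  | @cons a x b l _ ih =>
    rw [imagePL, Set.disjoint_union_left] at h
    linarith [angSum_sub_comm_of_disjoint_segment hm h.1, ih h.2, angSum_cons_cons c a x l,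
      angSum_cons_cons d a x l]

section Spokes

variable {ι : Type*} [Fintype ι] {e : Equiv.Perm ι} {a : ι → ℂ} {b c : ℂ} {β γ σ : ι → List ℂ}

/-- The skew angle sum of a family of spokes, `β v` being a polygonal line from `a v` to a hub
common to all `v`: each spoke is seen once from the point preceding its origin and once, with the
opposite sign, from the point following it. "Following" is an arbitrary permutation `e`; for the
winding of a triangle about the hub, `e` rotates the vertices. -/
noncomputable def skewAngSum (e : Equiv.Perm ι) (a : ι → ℂ) (β : ι → List ℂ) : ℝ :=
  ∑ v, (angSum (a v) (β (e v)) - angSum (a (e v)) (β v))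

theorem coe_skewAngSum (hβ : ∀ v, Joins (β v) (a v) b)
    (hβe : ∀ v, a (e v) ∉ imagePL (β v)) (hβe' : ∀ v, a v ∉ imagePL (β (e v))) :
    (skewAngSum e a β : Real.Angle) = Fintype.card ι • (Real.pi : Real.Angle) := by
  have hreindex := Equiv.sum_comp e fun v => ((b - a v).arg : Real.Angle)
  calc (skewAngSum e a β : Real.Angle)
      = ∑ v, ((b - a v).arg - (b - a (e v)).arg + (Real.pi : Real.Angle)) := by
        rw [skewAngSum, ← Real.Angle.coe_coeHom, map_sum]
        exact Finset.sum_congr rfl fun v _ =>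
          coe_angSum_sub_angSum (hβ v) (hβ (e v)) (hβe v) (hβe' v)
    _ = Fintype.card ι • (Real.pi : Real.Angle) := by
        rw [Finset.sum_add_distrib, Finset.sum_sub_distrib, hreindex, sub_self, zero_add,
          Finset.sum_const, Finset.card_univ]

theorem skewAngSum_add_skewAngSum_eq_zero (hβ : ∀ v, Joins (β v) (a v) b)
    (hγ : ∀ v, Joins (γ v) (a v) c) (h : ∀ v, Disjoint (imagePL (β v)) (imagePL (γ (e v))))
    (h' : ∀ v, Disjoint (imagePL (β (e v))) (imagePL (γ v))) :
    skewAngSum e a β + skewAngSum e a γ = 0 := by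
  have hb := Equiv.sum_comp e fun v => angSum b (γ v)
  have hc := Equiv.sum_comp e fun v => angSum c (β v)
  calc skewAngSum e a β + skewAngSum e a γ
      = ∑ v, (angSum b (γ (e v)) - angSum b (γ v) + (angSum c (β (e v)) - angSum c (β v))) := by
        rw [skewAngSum, skewAngSum, ← Finset.sum_add_distrib]
        refine Finset.sum_congr rfl fun v _ => ?_
        linarith [angSum_sub_comm_of_disjoint (hβ v) (hγ (e v)) (h v),
          angSum_sub_comm_of_disjoint (hβ (e v)) (hγ v) (h' v)]
    _ = 0 := by
        rw [Finset.sum_add_distrib, Finset.sum_sub_distrib, Finset.sum_sub_distrib, hb, hc]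
        ring

theorem sum_angSum_eq_add_skewAngSum (he : ∀ v, e (e (e v)) = v)
    (hσ : ∀ v, Joins (σ v) (a v) (a (e v))) (hβ : ∀ v, Joins (β v) (a v) b)
    (h : ∀ v, Disjoint (imagePL (σ v)) (imagePL (β (e (e v))))) :
    ∑ v, angSum b (σ v) = ∑ v, angSum (a (e (e v))) (σ v) + skewAngSum e a β := by
  have hout := Equiv.sum_comp e fun v => angSum (a v) (β (e v))
  have hin := Equiv.sum_comp (e.trans e) fun v => angSum (a (e v)) (β v)
  simp only [Equiv.trans_apply, he] at hin
  rw [skewAngSum, Finset.sum_sub_distrib, ← hout, ← hin, ← Finset.sum_sub_distrib,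
    ← Finset.sum_add_distrib]
  refine Finset.sum_congr rfl fun v _ => ?_
  linarith [angSum_sub_comm_of_disjoint (hσ v) (hβ (e (e v))) (h v)]

theorem sum_wp_sub_sum_wp (he : ∀ v, e (e (e v)) = v)
    (hσ : ∀ v, Joins (σ v) (a v) (a (e v))) (hβ : ∀ v, Joins (β v) (a v) b)
    (hγ : ∀ v, Joins (γ v) (a v) c)
    (hσβ : ∀ v, Disjoint (imagePL (σ v)) (imagePL (β (e (e v)))))
    (hσγ : ∀ v, Disjoint (imagePL (σ v)) (imagePL (γ (e (e v)))))
    (hβγ : ∀ v, Disjoint (imagePL (β v)) (imagePL (γ (e v))))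
    (hβγ' : ∀ v, Disjoint (imagePL (β (e v))) (imagePL (γ v))) :
    ∑ v, wp b (σ v) - ∑ v, wp c (σ v) = skewAngSum e a β / Real.pi := by
  have hdiff : ∑ v, angSum b (σ v) - ∑ v, angSum c (σ v) = 2 * skewAngSum e a β := by
    linarith [sum_angSum_eq_add_skewAngSum he hσ hβ hσβ, sum_angSum_eq_add_skewAngSum he hσ hγ hσγ,
      skewAngSum_add_skewAngSum_eq_zero hβ hγ hβγ hβγ']
  simp only [wp, ← Finset.sum_div, ← sub_div, hdiff]
  exact mul_div_mul_left _ _ two_ne_zero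

end Spokes

theorem exists_odd_div_pi_eq {x : ℝ} (hx : (x : Real.Angle) = Real.pi) :
    ∃ n : ℤ, Odd n ∧ x / Real.pi = n := by
  obtain ⟨k, hk⟩ := Real.Angle.angle_eq_iff_two_pi_dvd_sub.1 hx
  refine ⟨2 * k + 1, odd_two_mul_add_one k, ?_⟩
  rw [div_eq_iff Real.pi_ne_zero]
  push_cast
  linarith

instance : DecidableRel IsEdgeK5m45 := fun i j => by
  unfold IsEdgeK5m45
  infer_instance

/-- Let `f` be an almost embedding of `K₅ − 45` in the plane (five
pairwise distinct points, a polygonal line `p i j` joining `f i` to `f j` for each edge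
`{i,j}` with `p j i` the reverse of `p i j`, images of non-adjacent edges disjoint, and
`f l` not on the image of any edge `{i,j}` with `l ∉ {i,j}`). Then
`w_f(123, 4) − w_f(123, 5)` is an odd integer, where
`w_f(123, l) := w'(p₁₂, f l) + w'(p₂₃, f l) + w'(p₃₁, f l)`
(vertices `1,…,5` are encoded as `0,…,4 : Fin 5`). -/
theorem winding_difference_odd_K5_minus_edge (f : Fin 5 → ℂ)
    (p : Fin 5 → Fin 5 → List ℂ)
    (hinj : Function.Injective f)
    (hne : ∀ i j, IsEdgeK5m45 i j → p i j ≠ [])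
    (hjoin : ∀ i j, ∀ h : IsEdgeK5m45 i j,
      (p i j).headI = f i ∧ (p i j).getLast (hne i j h) = f j)
    (hsym : ∀ i j, p j i = (p i j).reverse)
    (hdisj : ∀ i j k l : Fin 5, IsEdgeK5m45 i j → IsEdgeK5m45 k l →
      i ≠ k → i ≠ l → j ≠ k → j ≠ l →
      Disjoint (imagePL (p i j)) (imagePL (p k l)))
    (hvert : ∀ i j l : Fin 5, IsEdgeK5m45 i j → l ≠ i → l ≠ j →
      f l ∉ imagePL (p i j)) :
    ∃ n : ℤ, Odd n ∧
      (wp (f 3) (p 0 1) + wp (f 3) (p 1 2) + wp (f 3) (p 2 0)) -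
      (wp (f 4) (p 0 1) + wp (f 4) (p 1 2) + wp (f 4) (p 2 0)) = n := by
  have hp (i j : Fin 5) (h : IsEdgeK5m45 i j) : Joins (p i j) (f i) (f j) :=
    (hjoin i j h).1 ▸ (hjoin i j h).2 ▸ joins_headI_getLast (hne i j h)
  have hpp (i j k l : Fin 5) : (IsEdgeK5m45 i j ∧ IsEdgeK5m45 k l ∧ i ≠ k ∧ i ≠ l ∧ j ≠ k ∧ j ≠ l) →
      Disjoint (imagePL (p i j)) (imagePL (p k l)) :=
    fun ⟨hij, hkl, hik, hil, hjk, hjl⟩ => hdisj i j k l hij hkl hik hil hjk hjl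
  have hfp (i j l : Fin 5) : (IsEdgeK5m45 i j ∧ l ≠ i ∧ l ≠ j) → f l ∉ imagePL (p i j) :=
    fun ⟨hij, hli, hlj⟩ => hvert i j l hij hli hlj
  have hspoke (v : Fin 3) : Joins (p (v.castAdd 2) 3) (f (v.castAdd 2)) (f 3) :=
    hp _ _ (by decide +revert)
  have hdiff := sum_wp_sub_sum_wp (e := finRotate 3)
    (σ := fun v => p (v.castAdd 2) ((finRotate 3 v).castAdd 2)) (γ := fun v => p (v.castAdd 2) 4)
    (by decide) (fun v => hp _ _ (by decide +revert)) hspoke (fun v => hp _ _ (by decide +revert))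
    (fun v => hpp _ _ _ _ (by decide +revert)) (fun v => hpp _ _ _ _ (by decide +revert))
    (fun v => hpp _ _ _ _ (by decide +revert)) (fun v => hpp _ _ _ _ (by decide +revert))
  have hskew := coe_skewAngSum (e := finRotate 3) hspoke
    (fun v => hfp _ _ _ (by decide +revert)) (fun v => hfp _ _ _ (by decide +revert))
  rw [Fintype.card_fin, succ_nsmul, Real.Angle.two_nsmul_coe_pi, zero_add] at hskew
  obtain ⟨n, hn, hskew_eq⟩ := exists_odd_div_pi_eq hskew
  refine ⟨n, hn, ?_⟩
  rw [← hskew_eq, ← hdiff, Fin.sum_univ_three, Fin.sum_univ_three]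
  rfl
end

section
/- Let l₁, l₂, l₃ be polygonal lines in the plane joining a point O to points A₁, A₂, A₃ respectively, such that Aᵢ does not lie on the image of lⱼ whenever i ≠ j. Then the triodic Wu number wu(l₁, l₂, l₃) := 2·(w'(l̄₂l₃, A₁) + w'(l̄₁l₂, A₃) + w'(l̄₃l₁, A₂)) is an odd integer, where l̄ denotes the reverse of l and l̄ᵢlⱼ denotes the concatenation of l̄ᵢ and lⱼ (a polygonal line from Aᵢ through O to Aⱼ). -/
/-!
Modulo `2π`, the angle sum around `X` of a polygonal line from `A` to `B` telescopes to the single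
oriented angle `∠AXB`, whatever the intermediate vertices. Hence the three angle sums add up to the
sum of the oriented angles of the triangle `A₁A₂A₃`, which is `π` modulo `2π`.
-/

/-- The polygonal line `l` joins `A` to `B`: its first point is `A` and its last point is `B`.
Stated with the `Option`-valued end points, so that it also entails that `l` is nonempty. -/
structure JoinsPL (l : List ℂ) (A B : ℂ) : Prop where
  head?_eq : l.head? = some A
  getLast?_eq : l.getLast? = some B

theorem mem_imagePL_of_mem {X : ℂ} : ∀ {l : List ℂ}, X ∈ l → X ∈ imagePL l
  | [_], h => List.mem_singleton.1 h
  | a :: b :: _, h => by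
    obtain rfl | h := List.mem_cons.1 h
    · exact Or.inl (left_mem_segment ℝ _ b)
    · exact Or.inr (mem_imagePL_of_mem h)

theorem notMem_reverse_append_of_notMem_imagePL {X : ℂ} {l m : List ℂ}
    (hl : X ∉ imagePL l) (hm : X ∉ imagePL m) : X ∉ l.reverse ++ m := by
  simp only [List.mem_append, List.mem_reverse]
  exact not_or_intro (mt mem_imagePL_of_mem hl) (mt mem_imagePL_of_mem hm)

namespace JoinsPL

theorem reverse_append {l m : List ℂ} (hl : l ≠ []) (hm : m ≠ []) :
    JoinsPL (l.reverse ++ m) (l.getLast hl) (m.getLast hm) where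
  head?_eq := by simp [List.getLast?_eq_some_getLast hl]
  getLast?_eq := by simp [List.getLast?_eq_some_getLast hm]

theorem left_mem {l : List ℂ} {A B : ℂ} (h : JoinsPL l A B) : A ∈ l :=
  List.mem_of_head? h.head?_eq

theorem coe_angSum {X A B : ℂ} : ∀ {l : List ℂ}, JoinsPL l A B → X ∉ l →
    (angSum X l : Real.Angle) = Complex.arg (B - X) - Complex.arg (A - X)
  | [], ⟨hA, _⟩, _ => by simp at hA
  | [a], ⟨hA, hB⟩, _ => by
    obtain rfl : a = A := by simpa using hA
    obtain rfl : a = B := by simpa using hB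
    simp [angSum]
  | a :: b :: rest, ⟨hA, hB⟩, hX => by
    obtain rfl : a = A := by simpa using hA
    have hXtail : X ∉ b :: rest := List.not_mem_of_not_mem_cons hX
    have htail : JoinsPL (b :: rest) b B := ⟨rfl, by simpa using hB⟩
    have haX : a - X ≠ 0 := sub_ne_zero.2 (List.ne_of_not_mem_cons hX).symm
    have hbX : b - X ≠ 0 := sub_ne_zero.2 (List.ne_of_not_mem_cons hXtail).symm
    rw [angSum, Real.Angle.coe_add, Complex.arg_div_coe_angle hbX haX,
      coe_angSum htail hXtail]
    abel

end JoinsPL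

theorem arg_sub_add_arg_sub_add_arg_sub_eq_pi {A B C : ℂ} (hAB : A ≠ B) (hBC : B ≠ C)
    (hCA : C ≠ A) :
    ((Complex.arg (C - A) - Complex.arg (B - A)) + (Complex.arg (A - B) - Complex.arg (C - B)) +
      (Complex.arg (B - C) - Complex.arg (A - C)) : Real.Angle) = Real.pi := by
  have arg_sub_comm {z w : ℂ} (h : z ≠ w) :
      (Complex.arg (z - w) : Real.Angle) = Complex.arg (w - z) + Real.pi := by
    rw [← neg_sub w z, Complex.arg_neg_coe_angle (sub_ne_zero.2 h.symm)]
  have pi_add_pi_add_pi : (Real.pi + Real.pi + Real.pi : Real.Angle) = Real.pi := by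
    rw [Real.Angle.coe_pi_add_coe_pi, zero_add]
  rw [arg_sub_comm hAB, arg_sub_comm hBC, arg_sub_comm hCA]
  convert pi_add_pi_add_pi using 1
  abel

theorem coe_eq_coe_pi_iff_exists_odd {θ : ℝ} :
    (θ : Real.Angle) = Real.pi ↔ ∃ n : ℤ, Odd n ∧ θ / Real.pi = n := by
  rw [Real.Angle.angle_eq_iff_two_pi_dvd_sub]
  constructor
  · rintro ⟨k, hk⟩
    refine ⟨2 * k + 1, odd_two_mul_add_one k, ?_⟩
    rw [div_eq_iff Real.pi_ne_zero]
    push_cast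
    linear_combination hk
  · rintro ⟨_, ⟨k, rfl⟩, hk⟩
    rw [div_eq_iff Real.pi_ne_zero] at hk
    push_cast at hk
    exact ⟨k, by linear_combination hk⟩

theorem triodic_wu_number_odd_general {A₁ A₂ A₃ : ℂ} {p₁ p₂ p₃ : List ℂ}
    (hp₁ : JoinsPL p₁ A₂ A₃) (hp₂ : JoinsPL p₂ A₃ A₁) (hp₃ : JoinsPL p₃ A₁ A₂)
    (hA₁ : A₁ ∉ p₁) (hA₂ : A₂ ∉ p₂) (hA₃ : A₃ ∉ p₃) :
    ∃ n : ℤ, Odd n ∧ 2 * (wp A₁ p₁ + wp A₃ p₃ + wp A₂ p₂) = n := by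
  have h₁₂ : A₁ ≠ A₂ := (ne_of_mem_of_not_mem hp₁.left_mem hA₁).symm
  have h₂₃ : A₂ ≠ A₃ := (ne_of_mem_of_not_mem hp₂.left_mem hA₂).symm
  have h₃₁ : A₃ ≠ A₁ := (ne_of_mem_of_not_mem hp₃.left_mem hA₃).symm
  have angSum_eq_pi :
      ((angSum A₁ p₁ + angSum A₂ p₂ + angSum A₃ p₃ : ℝ) : Real.Angle) = Real.pi := by
    rw [Real.Angle.coe_add, Real.Angle.coe_add, hp₁.coe_angSum hA₁, hp₂.coe_angSum hA₂,
      hp₃.coe_angSum hA₃, arg_sub_add_arg_sub_add_arg_sub_eq_pi h₁₂ h₂₃ h₃₁]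
  obtain ⟨n, hn, hsum⟩ := coe_eq_coe_pi_iff_exists_odd.1 angSum_eq_pi
  refine ⟨n, hn, hsum ▸ ?_⟩
  simp only [wp]
  field_simp
  ring

/-- Let `l₁, l₂, l₃` be polygonal lines in the plane joining a point `O`
to points `A₁, A₂, A₃` respectively, such that `Aᵢ` does not lie on the image of `lⱼ`
whenever `i ≠ j`. Then the triodic Wu number
`wu(l₁, l₂, l₃) := 2·(w'(l̄₂l₃, A₁) + w'(l̄₁l₂, A₃) + w'(l̄₃l₁, A₂))`
is an odd integer, where `l̄` denotes the reverse of `l` and `l̄ᵢlⱼ` is the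
concatenation of `l̄ᵢ` and `lⱼ` (a polygonal line from `Aᵢ` through `O` to `Aⱼ`). -/
theorem triodic_wu_number_odd (O A₁ A₂ A₃ : ℂ) (l₁ l₂ l₃ : List ℂ)
    (hn1 : l₁ ≠ []) (hn2 : l₂ ≠ []) (hn3 : l₃ ≠ [])
    (hh1 : l₁.headI = O) (hh2 : l₂.headI = O) (hh3 : l₃.headI = O)
    (he1 : l₁.getLast hn1 = A₁) (he2 : l₂.getLast hn2 = A₂) (he3 : l₃.getLast hn3 = A₃)
    (h12 : A₁ ∉ imagePL l₂) (h13 : A₁ ∉ imagePL l₃)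
    (h21 : A₂ ∉ imagePL l₁) (h23 : A₂ ∉ imagePL l₃)
    (h31 : A₃ ∉ imagePL l₁) (h32 : A₃ ∉ imagePL l₂) :
    ∃ n : ℤ, Odd n ∧
      2 * (wp A₁ (l₂.reverse ++ l₃) + wp A₃ (l₁.reverse ++ l₂) +
        wp A₂ (l₃.reverse ++ l₁)) = n := by
  subst he1 he2 he3
  exact triodic_wu_number_odd_general (.reverse_append hn2 hn3) (.reverse_append hn3 hn1)
    (.reverse_append hn1 hn2) (notMem_reverse_append_of_notMem_imagePL h12 h13)
    (notMem_reverse_append_of_notMem_imagePL h23 h21)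
    (notMem_reverse_append_of_notMem_imagePL h31 h32)
end
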